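/- arXiv:1712.03345 — 2 statements merged into one kernel-verified Lean document; each statement's English description precedes it below -/
import Mathlib

section
/- Let S be a homomorphism of the Fibonacci language L_F with values S_0 = S(0), S_1 = S(1). Then S(L_F) = {(S_0 − S_1)·⌊nΦ⌋ + (2S_1 − S_0)·n + S_0 − S_1 : n ≥ 1} ∪ {(S_0 − S_1)·⌊nΦ⌋ + (2S_1 − S_0)·n : n ≥ 1}, where Φ = (1+√5)/2. -/
/-- `w` is a nonempty finite factor of the infinite word `f`. -/
def IsFactor {A : Type*} (f : ℕ → A) (w : List A) : Prop :=
  w ≠ [] ∧ ∃ i : ℕ, w = (List.range w.length).map fun j => f (i + j)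

/-- The golden mean `Φ = (1+√5)/2`. -/
noncomputable def Phi : ℝ := (1 + Real.sqrt 5) / 2

/-- The Fibonacci word `c(n) = ⌊(n+2)α⌋ − ⌊(n+1)α⌋` with `α = 2 − Φ`. -/
noncomputable def fibWord (n : ℕ) : ℤ :=
  ⌊((n : ℝ) + 2) * (2 - Phi)⌋ - ⌊((n : ℝ) + 1) * (2 - Phi)⌋

/-- The infinite word `0c`: the Fibonacci word prefixed by `0`. -/
noncomputable def fibWord0 (n : ℕ) : ℤ :=
  if n = 0 then 0 else fibWord (n - 1)

/-- The infinite word `1c`: the Fibonacci word prefixed by `1`. -/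
noncomputable def fibWord1 (n : ℕ) : ℤ :=
  if n = 0 then 1 else fibWord (n - 1)

/-- The Fibonacci language: nonempty finite factors of `0c` or of `1c`. -/
def fibLang : Set (List ℤ) :=
  {w | IsFactor fibWord0 w ∨ IsFactor fibWord1 w}

/-- The homomorphism determined by `S0 = S(0)`, `S1 = S(1)`:
`S(w) = N_0(w)·S0 + N_1(w)·S1`. -/
def wordVal01 (S0 S1 : ℕ) (w : List ℤ) : ℕ :=
  w.count 0 * S0 + w.count 1 * S1

lemma Phi_bounds : 1 < Phi ∧ Phi < 2 := by
  have h := Real.sq_sqrt (show (0:ℝ) ≤ 5 by norm_num)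
  have h0 := Real.sqrt_nonneg 5
  unfold Phi
  constructor <;> nlinarith

lemma Phi_irr : Irrational Phi := Real.goldenRatio_irrational

/-- The integer sequence `⌊nα⌋`. -/
noncomputable def GG (n : ℕ) : ℤ := ⌊(n : ℝ) * (2 - Phi)⌋

/-- Partial sums for the word `1c`. -/
noncomputable def HH (n : ℕ) : ℤ := if n = 0 then -1 else GG n

lemma GG_zero : GG 0 = 0 := by simp [GG]

lemma GG_one : GG 1 = 0 := by
  have := Phi_bounds
  unfold GG
  rw [Int.floor_eq_iff]
  push_cast
  constructor <;> linarith

lemma GG_add (a b : ℕ) : GG (a + b) - GG a = GG b ∨ GG (a + b) - GG a = GG b + 1 := by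
  have h1 := Int.le_floor_add ((a : ℝ) * (2 - Phi)) ((b : ℝ) * (2 - Phi))
  have h2 := Int.le_floor_add_floor ((a : ℝ) * (2 - Phi)) ((b : ℝ) * (2 - Phi))
  have h3 : GG (a + b) = ⌊(a : ℝ) * (2 - Phi) + (b : ℝ) * (2 - Phi)⌋ := by
    unfold GG
    congr 1
    push_cast
    ring
  rw [← h3] at h1 h2
  change GG a + GG b ≤ _ at h1
  change _ ≤ GG a + GG b at h2
  omega

lemma GG_floor (n : ℕ) (hn : 1 ≤ n) : GG n = 2 * n - ⌊(n : ℝ) * Phi⌋ - 1 := by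
  have hirr : Irrational ((n : ℝ) * Phi) := Phi_irr.natCast_mul (by omega)
  have h1 := Int.floor_le ((n : ℝ) * Phi)
  have h2 := Int.lt_floor_add_one ((n : ℝ) * Phi)
  have h3 := hirr.ne_int ⌊(n : ℝ) * Phi⌋
  have h4 := lt_of_le_of_ne h1 h3.symm
  unfold GG
  rw [Int.floor_eq_iff]
  push_cast
  constructor <;> linarith

lemma fibWord_eq (n : ℕ) : fibWord n = GG (n + 1 + 1) - GG (n + 1) := by
  unfold fibWord GG
  push_cast
  rw [show (n : ℝ) + 1 + 1 = n + 2 by ring]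

lemma fibWord0_eq (n : ℕ) : fibWord0 n = GG (n + 1) - GG n := by
  rcases n with _ | n
  · simp [fibWord0, GG_zero, GG_one]
  · simp [fibWord0, fibWord_eq]

lemma fibWord1_eq (n : ℕ) : fibWord1 n = HH (n + 1) - HH n := by
  rcases n with _ | n
  · simp [fibWord1, HH, GG_one]
  · simp [fibWord1, fibWord_eq, HH]

lemma fibWord0_val (n : ℕ) : fibWord0 n = 0 ∨ fibWord0 n = 1 := by
  have := GG_add n 1
  rw [fibWord0_eq]
  rw [GG_one] at this
  simpa using this

lemma fibWord1_val (n : ℕ) : fibWord1 n = 0 ∨ fibWord1 n = 1 := by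
  rcases n with _ | n
  · simp [fibWord1]
  · simpa [fibWord0, fibWord1] using fibWord0_val (n + 1)

lemma count_aux (f H : ℕ → ℤ) (hf : ∀ n, f n = H (n + 1) - H n)
    (hv : ∀ n, f n = 0 ∨ f n = 1) (i n : ℕ) :
    ((((List.range n).map fun j => f (i + j)).count 1 : ℕ) : ℤ) = H (i + n) - H i ∧
    ((((List.range n).map fun j => f (i + j)).count 0 : ℕ) : ℤ) = n - (H (i + n) - H i) := by
  induction n with
  | zero => simp
  | succ n ih =>
    obtain ⟨h1, h0⟩ := ih
    have e := hf (i + n)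
    rw [← add_assoc, List.range_succ, List.map_append, List.count_append, List.count_append]
    rcases hv (i + n) with h | h <;> simp [h] <;> rw [h] at e <;> constructor <;> linarith

lemma val_aux (S0 S1 : ℕ) (f H : ℕ → ℤ) (hf : ∀ n, f n = H (n + 1) - H n)
    (hv : ∀ n, f n = 0 ∨ f n = 1) (i n : ℕ) :
    (wordVal01 S0 S1 ((List.range n).map fun j => f (i + j)) : ℤ) =
      (n - (H (i + n) - H i)) * S0 + (H (i + n) - H i) * S1 := by
  obtain ⟨h1, h0⟩ := count_aux f H hf hv i n
  unfold wordVal01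
  push_cast
  rw [h1, h0]

lemma factor_mk (f : ℕ → ℤ) (n : ℕ) (hn : 1 ≤ n) :
    IsFactor f ((List.range n).map fun j => f (0 + j)) := by
  refine ⟨?_, 0, by simp⟩
  simp
  omega

theorem fib_image (S0 S1 : ℕ) (hS0 : 0 < S0) (hS1 : 0 < S1) :
    {m : ℕ | ∃ w ∈ fibLang, wordVal01 S0 S1 w = m} =
      {m : ℕ | ∃ n : ℕ, 1 ≤ n ∧
        ((m : ℤ) = ((S0 : ℤ) - S1) * ⌊(n : ℝ) * Phi⌋ + (2 * S1 - S0) * n + S0 - S1 ∨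
         (m : ℤ) = ((S0 : ℤ) - S1) * ⌊(n : ℝ) * Phi⌋ + (2 * S1 - S0) * n)} := by
  ext m
  simp only [Set.mem_setOf_eq]
  constructor
  · rintro ⟨w, hw, rfl⟩
    have key : ∀ f H : ℕ → ℤ, (∀ n, f n = H (n + 1) - H n) → (∀ n, f n = 0 ∨ f n = 1) →
        (∀ i n, 1 ≤ n → H (i + n) - H i = GG n ∨ H (i + n) - H i = GG n + 1) →
        IsFactor f w → ∃ n : ℕ, 1 ≤ n ∧
        ((wordVal01 S0 S1 w : ℤ) =
          ((S0 : ℤ) - S1) * ⌊(n : ℝ) * Phi⌋ + (2 * S1 - S0) * n + S0 - S1 ∨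
         (wordVal01 S0 S1 w : ℤ) =
          ((S0 : ℤ) - S1) * ⌊(n : ℝ) * Phi⌋ + (2 * S1 - S0) * n) := by
      rintro f H hf hv hH ⟨hne, i, hi⟩
      have hn : 1 ≤ w.length := List.length_pos_iff.mpr hne
      have hval := val_aux S0 S1 f H hf hv i w.length
      rw [← hi] at hval
      refine ⟨w.length, hn, ?_⟩
      have hg := GG_floor w.length hn
      rcases hH i w.length hn with h | h
      · left
        rw [hval, h, hg]
        ring
      · right
        rw [hval, h, hg]
        ring
    rcases hw with hw | hw
    · exact key _ GG fibWord0_eq fibWord0_val (fun i n _ => GG_add i n) hw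
    · refine key _ HH fibWord1_eq fibWord1_val (fun i n hn => ?_) hw
      rcases i with _ | i
      · right
        have : n ≠ 0 := by omega
        simp [HH, this]
      · have := GG_add (i + 1) n
        have h2 : i + 1 + n ≠ 0 := by omega
        simpa [HH, h2] using this
  · rintro ⟨n, hn, h⟩
    have hg := GG_floor n hn
    rcases h with h | h
    · refine ⟨_, Or.inl (factor_mk fibWord0 n hn), ?_⟩
      zify
      rw [val_aux S0 S1 _ GG fibWord0_eq fibWord0_val, h, zero_add, GG_zero, hg]
      ring
    · refine ⟨_, Or.inr (factor_mk fibWord1 n hn), ?_⟩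
      have h0 : HH 0 = -1 := by simp [HH]
      have h1 : HH n = GG n := by
        have : n ≠ 0 := by omega
        simp [HH, this]
      zify
      rw [val_aux S0 S1 _ HH fibWord1_eq fibWord1_val, h, zero_add, h0, h1, hg]
      ring
end

section
/- Let S be a homomorphism of the Thue–Morse language L_TM with values p = S(a), q = S(b), and set r = p + q. Then S(L_TM) = {(n+1)·r : n ≥ 0} ∪ {n·r + p : n ≥ 0} ∪ {n·r + q : n ≥ 0} ∪ {n·r + 2p : n ≥ 0} ∪ {n·r + 2q : n ≥ 0}; that is, the image is the union of five arithmetic progressions of common difference r = p + q, with first terms r, p, q, 2p and 2q respectively. -/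
/-- The Thue–Morse morphism `a ↦ ab`, `b ↦ ba` (here `a = false`, `b = true`),
extended to words by concatenation. -/
def tmMorph (w : List Bool) : List Bool :=
  w.flatMap fun x => if x then [true, false] else [false, true]

/-- The Thue–Morse word: the fixed point beginning with `a` of the Thue–Morse
morphism (the `n`-th letter is read off from a sufficiently high iterate on `a`). -/
def tmWord (n : ℕ) : Bool :=
  (tmMorph^[n + 1] [false]).getD n false

/-- The Thue–Morse language: nonempty finite factors of the Thue–Morse word. -/
def tmLang : Set (List Bool) :=
  {w | IsFactor tmWord w}

/-- The homomorphism determined by `p = S(a)`, `q = S(b)`: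
`S(w) = N_a(w)·p + N_b(w)·q`. -/
def wordValTM (p q : ℕ) (w : List Bool) : ℕ :=
  w.count false * p + w.count true * q

theorem tmMorph_even (w : List Bool) : ∀ n : ℕ, (tmMorph w)[2 * n]? = w[n]? := by
  induction w with
  | nil => intro n; simp [tmMorph]
  | cons x w ih =>
    intro n
    have hx : tmMorph (x :: w) = x :: (!x) :: tmMorph w := by
      cases x <;> simp [tmMorph]
    rw [hx]
    cases n with
    | zero => simp
    | succ n =>
      have := ih n
      rw [show 2 * (n + 1) = 2 * n + 1 + 1 by ring]
      simpa using this

theorem tmMorph_odd (w : List Bool) :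
    ∀ n : ℕ, (tmMorph w)[2 * n + 1]? = (w[n]?).map not := by
  induction w with
  | nil => intro n; simp [tmMorph]
  | cons x w ih =>
    intro n
    have hx : tmMorph (x :: w) = x :: (!x) :: tmMorph w := by
      cases x <;> simp [tmMorph]
    rw [hx]
    cases n with
    | zero => simp
    | succ n =>
      have := ih n
      rw [show 2 * (n + 1) + 1 = 2 * n + 1 + 1 + 1 by ring]
      simpa using this

theorem tmIter_length (k : ℕ) : (tmMorph^[k] [false]).length = 2 ^ k := by
  have hl : ∀ w : List Bool, (tmMorph w).length = 2 * w.length := by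
    intro w
    induction w with
    | nil => simp [tmMorph]
    | cons x w ih =>
      have hx : tmMorph (x :: w) = x :: (!x) :: tmMorph w := by
        cases x <;> simp [tmMorph]
      rw [hx]
      simp only [List.length_cons, ih]
      ring
  induction k with
  | zero => simp
  | succ k ih => rw [Function.iterate_succ_apply', hl, ih]; ring

theorem tmIter_prefix (k : ℕ) : tmMorph^[k] [false] <+: tmMorph^[k + 1] [false] := by
  induction k with
  | zero => exact ⟨[true], by simp [tmMorph]⟩
  | succ k ih =>
    obtain ⟨s, hs⟩ := ih
    have h1 : tmMorph^[k + 1] [false] = tmMorph (tmMorph^[k] [false]) :=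
      Function.iterate_succ_apply' _ _ _
    have h2 : tmMorph^[k + 1 + 1] [false] = tmMorph (tmMorph^[k + 1] [false]) :=
      Function.iterate_succ_apply' _ _ _
    refine ⟨tmMorph s, ?_⟩
    rw [← hs] at h2
    rw [h2, h1]
    simp [tmMorph]

theorem tmIter_prefix_le {k l : ℕ} (h : k ≤ l) :
    tmMorph^[k] [false] <+: tmMorph^[l] [false] := by
  induction l, h using Nat.le_induction with
  | base => exact List.prefix_refl _
  | succ l _ ih => exact ih.trans (tmIter_prefix l)

theorem tmIter_get (k n : ℕ) (h : n + 1 ≤ k) :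
    (tmMorph^[k] [false])[n]? = some (tmWord n) := by
  have hlt : n < (tmMorph^[n + 1] [false]).length := by
    rw [tmIter_length]
    exact lt_trans (Nat.lt_succ_self n) Nat.lt_two_pow_self
  obtain ⟨s, hs⟩ := tmIter_prefix_le h
  rw [← hs, List.getElem?_append_left hlt]
  unfold tmWord
  rw [List.getD_eq_getElem?_getD, List.getElem?_eq_getElem hlt]
  rfl

theorem tm_even (n : ℕ) : tmWord (2 * n) = tmWord n := by
  have h1 := tmIter_get (2 * n + 1 + 1) (2 * n) (by omega)
  rw [Function.iterate_succ_apply', tmMorph_even, tmIter_get _ _ (by omega)] at h1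
  exact (Option.some.inj h1).symm

theorem tm_odd (n : ℕ) : tmWord (2 * n + 1) = !tmWord n := by
  have h1 := tmIter_get (2 * n + 1 + 1) (2 * n + 1) (by omega)
  rw [Function.iterate_succ_apply', tmMorph_odd, tmIter_get _ _ (by omega)] at h1
  exact (Option.some.inj h1).symm

theorem tm_zero : tmWord 0 = false := by decide

theorem tm_pair (d : ℕ) : 1 ≤ d → ∀ x y : Bool, ∃ i, tmWord i = x ∧ tmWord (i + d) = y := by
  induction d using Nat.strong_induction_on with
  | _ d ih =>
    intro hd x y
    rcases Nat.even_or_odd' d with ⟨e, rfl | rfl⟩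
    · obtain ⟨i, h1, h2⟩ := ih e (by omega) (by omega) x y
      refine ⟨2 * i, by rw [tm_even, h1], ?_⟩
      rw [← mul_add, tm_even, h2]
    · rcases Nat.eq_zero_or_pos e with rfl | he
      · have t0 := tm_zero
        have t1 : tmWord 1 = true := by simpa [t0] using tm_odd 0
        have t2 : tmWord 2 = true := by simpa [t1] using tm_even 1
        have t3 : tmWord 3 = false := by simpa [t1] using tm_odd 1
        have t5 : tmWord 5 = false := by simpa [t2] using tm_odd 2
        have t6 : tmWord 6 = false := by simpa [t3] using tm_even 3
        cases x <;> cases y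
        · exact ⟨5, t5, t6⟩
        · exact ⟨0, t0, t1⟩
        · exact ⟨2, t2, t3⟩
        · exact ⟨1, t1, t2⟩
      · obtain ⟨i, h1, h2⟩ := ih e (by omega) he x (!y)
        refine ⟨2 * i, by rw [tm_even, h1], ?_⟩
        rw [show 2 * i + (2 * e + 1) = 2 * (i + e) + 1 by ring, tm_odd, h2]
        simp

/-- The factor of length `l` at position `i`. -/
def tmFac (i l : ℕ) : List Bool := (List.range l).map fun j => tmWord (i + j)

/-- The value of a letter. -/
def letVal (p q : ℕ) (x : Bool) : ℕ := if x then q else p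

theorem tmFac_mem (i l : ℕ) : tmFac i (l + 1) ∈ tmLang := by
  refine ⟨?_, i, ?_⟩
  · simp [tmFac]
  · simp [tmFac]

theorem val_append (p q : ℕ) (u v : List Bool) :
    wordValTM p q (u ++ v) = wordValTM p q u + wordValTM p q v := by
  simp only [wordValTM, List.count_append]; ring

theorem val_single (p q : ℕ) (x : Bool) : wordValTM p q [x] = letVal p q x := by
  cases x <;> simp [wordValTM, letVal]

theorem val_not (p q : ℕ) (x : Bool) : letVal p q x + letVal p q (!x) = p + q := by
  cases x <;> simp [letVal, add_comm]

theorem fac_succ (p q i l : ℕ) : wordValTM p q (tmFac i (l + 1)) =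
    wordValTM p q (tmFac i l) + letVal p q (tmWord (i + l)) := by
  rw [tmFac, List.range_succ, List.map_append, val_append, List.map_singleton, val_single]
  rfl

theorem fac_zero (p q i : ℕ) : wordValTM p q (tmFac i 0) = 0 := by
  simp [tmFac, wordValTM]

theorem fac_cons (p q i l : ℕ) : wordValTM p q (tmFac i (l + 1)) =
    letVal p q (tmWord i) + wordValTM p q (tmFac (i + 1) l) := by
  induction l with
  | zero => rw [fac_succ, fac_zero, fac_zero]; simp
  | succ l ih =>
    rw [fac_succ, ih, fac_succ p q (i + 1) l, show i + (l + 1) = i + 1 + l by ring]; ring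

theorem fac_ee (p q i n : ℕ) :
    wordValTM p q (tmFac (2 * i) (2 * n)) = n * (p + q) := by
  induction n with
  | zero => simp [fac_zero]
  | succ n ih =>
    rw [show 2 * (n + 1) = 2 * n + 1 + 1 by ring, fac_succ, fac_succ, ih,
      show 2 * i + (2 * n + 1) = 2 * (i + n) + 1 by ring, ← mul_add, tm_odd, tm_even,
      add_assoc, val_not]
    ring

theorem fac_eo (p q i n : ℕ) : wordValTM p q (tmFac (2 * i) (2 * n + 1)) =
    n * (p + q) + letVal p q (tmWord (i + n)) := by
  rw [fac_succ, fac_ee, ← mul_add, tm_even]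

theorem fac_oo (p q i n : ℕ) : wordValTM p q (tmFac (2 * i + 1) (2 * n + 1)) =
    n * (p + q) + letVal p q (!tmWord i) := by
  rw [fac_cons, show 2 * i + 1 + 1 = 2 * (i + 1) by ring, fac_ee, tm_odd, add_comm]

theorem fac_oe (p q i n : ℕ) : wordValTM p q (tmFac (2 * i + 1) (2 * n + 2)) =
    n * (p + q) + letVal p q (!tmWord i) + letVal p q (tmWord (i + (n + 1))) := by
  rw [show 2 * n + 2 = (2 * n + 1) + 1 by ring, fac_cons,
    show 2 * i + 1 + 1 = 2 * (i + 1) by ring, fac_eo, tm_odd,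
    show i + 1 + n = i + (n + 1) by ring]
  ring

theorem tm_image (p q : ℕ) (hp : 0 < p) (hq : 0 < q) (r : ℕ) (hr : r = p + q) :
    {m : ℕ | ∃ w ∈ tmLang, wordValTM p q w = m} =
      {m : ℕ | ∃ n : ℕ, m = (n + 1) * r ∨ m = n * r + p ∨ m = n * r + q ∨
        m = n * r + 2 * p ∨ m = n * r + 2 * q} := by
  subst hr
  ext m
  simp only [Set.mem_setOf_eq]
  constructor
  · rintro ⟨w, ⟨hne, i, hw⟩, rfl⟩
    have hl : 0 < w.length := List.length_pos_iff.mpr hne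
    have hw' : w = tmFac i w.length := hw
    generalize w.length = l at hl hw'
    subst hw'
    rcases Nat.even_or_odd' i with ⟨i, rfl | rfl⟩ <;>
    rcases Nat.even_or_odd' l with ⟨n, rfl | rfl⟩
    · refine ⟨n - 1, Or.inl ?_⟩
      rw [fac_ee, Nat.sub_add_cancel (by omega)]
    · refine ⟨n, ?_⟩
      rw [fac_eo]
      cases tmWord (i + n) <;> simp [letVal]
    · obtain ⟨n, rfl⟩ : ∃ k, n = k + 1 := ⟨n - 1, by omega⟩
      refine ⟨n, ?_⟩
      rw [mul_add, mul_one, fac_oe]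
      cases tmWord i <;> cases tmWord (i + (n + 1)) <;> simp only [letVal]
      · left; simp; ring
      · right; right; right; right; simp; ring
      · right; right; right; left; simp; ring
      · left; simp; ring
    · refine ⟨n, ?_⟩
      rw [fac_oo]
      cases tmWord i <;> simp [letVal]
  · rintro ⟨n, h⟩
    have single : ∀ x, ∃ w ∈ tmLang, wordValTM p q w = n * (p + q) + letVal p q x := by
      intro x
      obtain ⟨i, h1, -⟩ := tm_pair 1 le_rfl (!x) x
      refine ⟨_, tmFac_mem (2 * i + 1) (2 * n), ?_⟩
      rw [fac_oo, h1, Bool.not_not]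
    have double : ∀ x, ∃ w ∈ tmLang, wordValTM p q w = n * (p + q) + 2 * letVal p q x := by
      intro x
      obtain ⟨i, h1, h2⟩ := tm_pair (n + 1) (by omega) (!x) x
      refine ⟨_, tmFac_mem (2 * i + 1) (2 * n + 1), ?_⟩
      rw [show 2 * n + 1 + 1 = 2 * n + 2 by ring, fac_oe, h1, h2, Bool.not_not]
      ring
    rcases h with rfl | rfl | rfl | rfl | rfl
    · refine ⟨_, tmFac_mem (2 * 0) (2 * n + 1), ?_⟩
      rw [show 2 * n + 1 + 1 = 2 * (n + 1) by ring, fac_ee]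
    · exact single false
    · exact single true
    · exact double false
    · exact double true
end
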